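/- The function f(x) = (e^{−1}·Γ(x+1)·x^{−x})^{1/x} is decreasing for x ≥ e³/(2π). Equivalently, for e³/(2π) ≤ x < y one has e^{−1/y}·Γ(y+1)^{1/y}/y ≤ e^{−1/x}·Γ(x+1)^{1/x}/x. -/

import Mathlib

/-!
Let `μ x = log Γ(x + 1) - (x log x - x + log (2πx) / 2)` be the remainder in Stirling's formula.
The logarithm of `f` is `-1 + log (c x) / (2 x) + μ x / x` with `c = 2π / e²`. The middle term
decreases as soon as `c x ≥ e`, that is `x ≥ e³ / (2π)`, because `log u / u` decreases for `u ≥ e`.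
The last term is a product of two nonnegative decreasing functions: the difference
`μ x - μ (x + 1) = (x + 1/2) log (1 + 1/x) - 1` has a power series in `1 / (2 x + 1)` with
nonnegative coefficients, so it decreases, and summing it along `x, x + 1, x + 2, …`, where `μ`
tends to `0`, shows that `μ` itself decreases to `0`.
-/

open Filter Real Set Topology
open scoped Nat

lemma antitoneOn_Ioi_of_antitoneOn_sub_add_one {f : ℝ → ℝ} {a l : ℝ}
    (hdiff : AntitoneOn (fun x ↦ f x - f (x + 1)) (Ioi a))
    (hlim : ∀ x ∈ Ioi a, Tendsto (fun n : ℕ ↦ f (x + n)) atTop (𝓝 l)) :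
    AntitoneOn f (Ioi a) := by
  intro x hx y hy hxy
  have hshift {z : ℝ} (hz : a < z) (n : ℕ) : a < z + n :=
    lt_add_of_lt_of_nonneg hz n.cast_nonneg
  have hanti : Antitone fun n : ℕ ↦ f (x + n) - f (y + n) :=
    antitone_nat_of_succ_le fun n ↦ by
      have := hdiff (hshift hx n) (hshift hy n) (by gcongr)
      simp only [Nat.cast_add_one, ← add_assoc]
      linarith
  have hgap : l - l ≤ f (x + (0 : ℕ)) - f (y + (0 : ℕ)) :=
    hanti.le_of_tendsto ((hlim x hx).sub (hlim y hy)) 0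
  simpa using hgap

lemma antitoneOn_log_const_mul_div_self {c : ℝ} (hc : 0 < c) :
    AntitoneOn (fun x ↦ log (c * x) / x) (Ici (exp 1 / c)) := by
  intro x hx y hy hxy
  have hmem {z : ℝ} (hz : exp 1 / c ≤ z) : exp 1 ≤ c * z := (div_le_iff₀' hc).mp hz
  have hscale (z : ℝ) : log (c * z) / z = c * (log (c * z) / (c * z)) := by
    rw [← mul_div_assoc, mul_div_mul_left _ _ hc.ne']
  simp only [hscale]
  gcongr c * ?_
  exact log_div_self_antitoneOn (hmem hx) (hmem hy) (by gcongr)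

lemma hasSum_add_half_mul_log_one_add_inv {x : ℝ} (hx : 0 < x) :
    HasSum (fun k : ℕ ↦ 1 / (2 * (k : ℝ) + 1) * (1 / (2 * x + 1)) ^ (2 * k))
      ((x + 1 / 2) * log (1 + x⁻¹)) := by
  convert! (hasSum_log_one_add_inv hx).mul_left (x + 1 / 2) using 2 with k
  rw [pow_succ]
  field

lemma antitoneOn_add_half_mul_log_one_add_inv :
    AntitoneOn (fun x : ℝ ↦ (x + 1 / 2) * log (1 + x⁻¹)) (Ioi 0) := by
  intro x (hx : 0 < x) y (hy : 0 < y) hxy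
  refine hasSum_le (fun k ↦ ?_) (hasSum_add_half_mul_log_one_add_inv hy)
    (hasSum_add_half_mul_log_one_add_inv hx)
  gcongr

lemma log_Gamma_add_one {x : ℝ} (hx : 0 < x) :
    log (Gamma (x + 1)) = log (Gamma x) + log x := by
  rw [Gamma_add_one hx.ne', log_mul hx.ne' (Gamma_pos_of_pos hx).ne', add_comm]

lemma tendsto_log_Gamma_add_nat_add_one_sub {x : ℝ} (hx : 0 < x) :
    Tendsto (fun n : ℕ ↦ log (Gamma (x + n + 1)) - (x * log n + log n !)) atTop (𝓝 0) := by
  have hseq (n : ℕ) : log (Gamma (x + n + 1)) - (x * log n + log n !) =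
      log (Gamma x) - BohrMollerup.logGammaSeq x n := by
    have hprod := BohrMollerup.f_add_nat_eq (f := fun y ↦ log (Gamma y))
      log_Gamma_add_one hx (n + 1)
    rw [Nat.cast_add_one, ← add_assoc] at hprod
    rw [hprod, BohrMollerup.logGammaSeq]
    ring
  simpa only [hseq, sub_self] using (BohrMollerup.tendsto_log_gamma hx).const_sub (log (Gamma x))

lemma tendsto_add_mul_log_one_add_div (x b : ℝ) :
    Tendsto (fun n : ℕ ↦ (n + b) * log (1 + x / n)) atTop (𝓝 x) := by
  have hlin : Tendsto (fun n : ℕ ↦ (n : ℝ) * log (1 + x / n)) atTop (𝓝 x) :=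
    (tendsto_mul_log_one_add_div_atTop x).comp tendsto_natCast_atTop_atTop
  have hlog : Tendsto (fun n : ℕ ↦ log (1 + x / n)) atTop (𝓝 0) := by
    simpa using ((tendsto_const_div_atTop_nhds_zero_nat x).const_add 1).log (by norm_num)
  simpa [add_mul] using hlin.add (hlog.const_mul b)

/-- Binet's function `μ`, the error of Stirling's approximation to `log Γ(x + 1)`. It is meant
for `0 < x`. -/
noncomputable def stirlingRemainder (x : ℝ) : ℝ :=
  log (Gamma (x + 1)) - (x * log x - x + log (2 * π * x) / 2)

lemma stirlingRemainder_sub_add_one {x : ℝ} (hx : 0 < x) :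
    stirlingRemainder x - stirlingRemainder (x + 1) = (x + 1 / 2) * log (1 + x⁻¹) - 1 := by
  have hinv : 1 + x⁻¹ = (x + 1) / x := by field
  have hx1 : 0 < x + 1 := by positivity
  simp (disch := positivity) only [stirlingRemainder, log_Gamma_add_one hx1, hinv, log_div, log_mul]
  ring

lemma stirlingRemainder_natCast {n : ℕ} (hn : n ≠ 0) :
    stirlingRemainder n = log (Stirling.stirlingSeq n) - log √π := by
  simp (disch := positivity) only [stirlingRemainder, Gamma_nat_eq_factorial,
    Stirling.log_stirlingSeq_formula, log_sqrt, log_div, log_mul, log_exp]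
  ring

lemma tendsto_stirlingRemainder_natCast :
    Tendsto (fun n : ℕ ↦ stirlingRemainder n) atTop (𝓝 0) := by
  have hlog : Tendsto (fun n ↦ log (Stirling.stirlingSeq n) - log √π) atTop (𝓝 0) := by
    simpa using (Stirling.tendsto_stirlingSeq_sqrt_pi.log (by positivity)).sub_const (log √π)
  refine hlog.congr' ?_
  filter_upwards [eventually_ne_atTop 0] with n hn using (stirlingRemainder_natCast hn).symm

lemma stirlingRemainder_add_natCast {x : ℝ} (hx : 0 < x) {n : ℕ} (hn : n ≠ 0) :
    stirlingRemainder (x + n) =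
      (log (Gamma (x + n + 1)) - (x * log n + log n !)) + stirlingRemainder n +
        (x - (n + (x + 1 / 2)) * log (1 + x / n)) := by
  have hratio : 1 + x / n = (x + n) / n := by field
  simp (disch := positivity) only [stirlingRemainder, Gamma_nat_eq_factorial, hratio, log_div,
    log_mul]
  ring

lemma tendsto_stirlingRemainder_add_natCast {x : ℝ} (hx : 0 < x) :
    Tendsto (fun n : ℕ ↦ stirlingRemainder (x + n)) atTop (𝓝 0) := by
  have hlim := ((tendsto_log_Gamma_add_nat_add_one_sub hx).add
    tendsto_stirlingRemainder_natCast).add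
      ((tendsto_add_mul_log_one_add_div x (x + 1 / 2)).const_sub x)
  simp only [sub_self, add_zero] at hlim
  refine hlim.congr' ?_
  filter_upwards [eventually_ne_atTop 0] with n hn using (stirlingRemainder_add_natCast hx hn).symm

lemma antitoneOn_stirlingRemainder : AntitoneOn stirlingRemainder (Ioi 0) := by
  refine antitoneOn_Ioi_of_antitoneOn_sub_add_one ?_
    fun x hx ↦ tendsto_stirlingRemainder_add_natCast hx
  intro x hx y hy hxy
  simp only [stirlingRemainder_sub_add_one hx, stirlingRemainder_sub_add_one hy]
  gcongr ?_ - 1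
  exact antitoneOn_add_half_mul_log_one_add_inv hx hy hxy

lemma stirlingRemainder_nonneg {x : ℝ} (hx : 0 < x) : 0 ≤ stirlingRemainder x :=
  le_of_tendsto' (tendsto_stirlingRemainder_add_natCast hx) fun n ↦
    antitoneOn_stirlingRemainder hx (add_pos_of_pos_of_nonneg hx n.cast_nonneg)
      (le_add_of_nonneg_right n.cast_nonneg)

lemma antitoneOn_stirlingRemainder_div_self :
    AntitoneOn (fun x ↦ stirlingRemainder x / x) (Ioi 0) := fun _ hx _ hy hxy ↦
  div_le_div₀ (stirlingRemainder_nonneg hx) (antitoneOn_stirlingRemainder hx hy hxy) hx hxy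

lemma exp_mul_Gamma_rpow_div_eq_exp {x : ℝ} (hx : 0 < x) :
    exp (-1 / x) * Gamma (x + 1) ^ (1 / x) / x =
      exp (-1 + log (2 * π / exp 2 * x) / x / 2 + stirlingRemainder x / x) := by
  have hΓ : 0 < Gamma (x + 1) := Gamma_pos_of_pos (by positivity)
  have hlog : log (2 * π / exp 2 * x) = log (2 * π * x) - 2 := by
    rw [div_mul_eq_mul_div, log_div (by positivity) (exp_ne_zero 2), log_exp]
  calc exp (-1 / x) * Gamma (x + 1) ^ (1 / x) / x
      = exp (-1 / x + log (Gamma (x + 1)) * (1 / x) - log x) := by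
        rw [rpow_def_of_pos hΓ, exp_sub, exp_add, exp_log hx]
    _ = _ := by
        rw [hlog, stirlingRemainder]
        congr 1
        field

/-- The function `f(x) = (e^{-1} Γ(x+1) x^{-x})^{1/x}` is decreasing for
`x ≥ e³/(2π)`: for `e³/(2π) ≤ x < y` one has
`e^{-1/y} Γ(y+1)^{1/y}/y ≤ e^{-1/x} Γ(x+1)^{1/x}/x`. -/
theorem exp_gamma_rpow_div_anti (x y : ℝ)
    (hx : Real.exp 1 ^ (3 : ℕ) / (2 * Real.pi) ≤ x) (hxy : x < y) :
    Real.exp (-1 / y) * Real.Gamma (y + 1) ^ (1 / y) / y ≤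
      Real.exp (-1 / x) * Real.Gamma (x + 1) ^ (1 / x) / x := by
  have hx0 : 0 < x := lt_of_lt_of_le (by positivity) hx
  have hy0 : 0 < y := hx0.trans hxy
  have hthreshold : exp 1 / (2 * π / exp 2) ≤ x := by
    rwa [div_div_eq_mul_div, ← exp_add, show (1 + 2 : ℝ) = (3 : ℕ) * 1 by norm_num, exp_nat_mul]
  rw [exp_mul_Gamma_rpow_div_eq_exp hx0, exp_mul_Gamma_rpow_div_eq_exp hy0]
  gcongr exp (-1 + ?_ / 2 + ?_)
  · exact antitoneOn_log_const_mul_div_self (by positivity) hthreshold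
      (hthreshold.trans hxy.le) hxy.le
  · exact antitoneOn_stirlingRemainder_div_self hx0 hy0 hxy.le
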